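/- Let d ≥ 1 and α > 0, and suppose 𝔼[z(0)] < ∞. For every ε ∈ (0, 𝔼[z(0)]) there exists c(ε) > 0 such that ℙ-almost surely, P₀(A(t) ≤ t(𝔼[z(0)] − ε)) ≤ exp(−t^{c(ε)}) for all sufficiently large t. -/

import Mathlib

open MeasureTheory ProbabilityTheory Filter Set

noncomputable section

/-- `n`-step transition probabilities of the discrete-time simple random walk on `ℤ^m`. -/
def srwKernel (m : ℕ) : ℕ → (Fin m → ℤ) → (Fin m → ℤ) → ℝ
  | 0, x, y => if x = y then 1 else 0
  | n + 1, x, y =>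
      (∑ i : Fin m, (srwKernel m n (Function.update x i (x i + 1)) y
        + srwKernel m n (Function.update x i (x i - 1)) y)) / (2 * m)

/-- Transition kernel of the continuous-time simple random walk on `ℤ^m` which jumps to
each of its `2m` nearest neighbours at rate `1` (total jump rate `2m`). -/
def heatKernel (m : ℕ) (t : ℝ) (x y : Fin m → ℤ) : ℝ :=
  ∑' n : ℕ, Real.exp (-(2 * m) * t) * ((2 * m) * t) ^ n / n.factorial * srwKernel m n x y

/-- `(P, S)` is (a realization of) the continuous-time simple random walk on `ℤ^m`:
under `P x` the process `S` starts at `x`, has right-continuous (piecewise constant)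
paths, and its finite-dimensional distributions are given by the heat kernel. -/
structure IsCTSRW (m : ℕ) {Ω : Type*} [MeasurableSpace Ω]
    (P : (Fin m → ℤ) → Measure Ω) (S : ℝ → Ω → (Fin m → ℤ)) : Prop where
  prob : ∀ x, IsProbabilityMeasure (P x)
  meas : Measurable fun p : ℝ × Ω => S p.1 p.2
  start : ∀ x, ∀ᵐ ω ∂ P x, S 0 ω = x
  rightCont : ∀ x, ∀ᵐ ω ∂ P x, ∀ t : ℝ, 0 ≤ t →
    ∃ ε > (0 : ℝ), ∀ u, t ≤ u → u < t + ε → S u ω = S t ω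
  fdd : ∀ x (n : ℕ) (t : Fin (n + 1) → ℝ), 0 ≤ t 0 →
    (∀ i : Fin n, t i.castSucc ≤ t i.succ) →
    ∀ y : Fin (n + 1) → (Fin m → ℤ),
      (P x {ω | ∀ i, S (t i) ω = y i}).toReal
        = heatKernel m (t 0) x (y 0)
          * ∏ i : Fin n, heatKernel m (t i.succ - t i.castSucc) (y i.castSucc) (y i.succ)

/-- `z` is an i.i.d. nonnegative random scenery on `ℤ^d` whose common upper tail decays
like `r^{-α+o(1)}`. -/
structure IsScenery (d : ℕ) (α : ℝ) {Ω : Type*} [MeasurableSpace Ω]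
    (μ : Measure Ω) (z : (Fin d → ℤ) → Ω → ℝ) : Prop where
  prob : IsProbabilityMeasure μ
  meas : ∀ x, Measurable (z x)
  nonneg : ∀ x ω, 0 ≤ z x ω
  indep : iIndepFun z μ
  ident : ∀ x, IdentDistrib (z x) (z 0) μ μ
  tail : Tendsto (fun r : ℝ => Real.log (μ {ω | r < z 0 ω}).toReal / Real.log r)
    atTop (nhds (-α))

/-- The random walk in random scenery `A(t) = ∫₀ᵗ z(S_u) du`. -/
def rwrs {Ωz Ωw : Type*} (d : ℕ) (z : (Fin d → ℤ) → Ωz → ℝ)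
    (S : ℝ → Ωw → (Fin d → ℤ)) (t : ℝ) (ζ : Ωz) (ω : Ωw) : ℝ :=
  ∫ u in Set.Ioc (0 : ℝ) t, z (S u ω) ζ

end

/-! ### Heat kernel estimates -/

lemma srw_nonneg (m n : ℕ) : ∀ x y, 0 ≤ srwKernel m n x y := by
  induction n with
  | zero => intro x y; simp only [srwKernel]; split_ifs <;> norm_num
  | succ n ih =>
    intro x y
    simp only [srwKernel]
    exact div_nonneg (Finset.sum_nonneg fun i _ => add_nonneg (ih _ _) (ih _ _)) (by positivity)

lemma srw_sum_eq_one (m : ℕ) (hm : 1 ≤ m) (n : ℕ) : ∀ (x : Fin m → ℤ) (F : Finset (Fin m → ℤ)),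
    (∀ y : Fin m → ℤ, (∀ i, |y i - x i| ≤ n) → y ∈ F) → ∑ y ∈ F, srwKernel m n x y = 1 := by
  induction n with
  | zero =>
    intro x F hF
    have : x ∈ F := hF x (by simp)
    simp [srwKernel, this]
  | succ n ih =>
    intro x F hF
    simp only [srwKernel]
    rw [← Finset.sum_div, Finset.sum_comm]
    have key : ∀ i : Fin m, ∀ s : ℤ, |s| ≤ 1 →
        ∑ y ∈ F, srwKernel m n (Function.update x i (x i + s)) y = 1 := by
      intro i s hs
      apply ih
      intro y hy
      apply hF
      intro j
      have := hy j
      by_cases hj : j = i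
      · subst hj
        simp only [Function.update_self] at this
        push_cast
        rw [abs_le] at *
        constructor <;> linarith
      · rw [Function.update_of_ne hj] at this
        push_cast
        linarith
    have h1 : ∀ i : Fin m, ∑ y ∈ F, (srwKernel m n (Function.update x i (x i + 1)) y
        + srwKernel m n (Function.update x i (x i - 1)) y) = 2 := by
      intro i
      rw [Finset.sum_add_distrib, key i 1 (by simp)]
      have := key i (-1) (by simp)
      rw [← sub_eq_add_neg] at this
      rw [this]; norm_num
    rw [Finset.sum_congr rfl fun i _ => h1 i]
    have : (m : ℝ) ≠ 0 := by positivity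
    simp
    field_simp

lemma srw_le_one (m : ℕ) (hm : 1 ≤ m) (n : ℕ) (x y : Fin m → ℤ) : srwKernel m n x y ≤ 1 := by
  classical
  let F : Finset (Fin m → ℤ) := insert y (Finset.Icc (fun i => x i - n) (fun i => x i + n))
  have h : ∑ y ∈ F, srwKernel m n x y = 1 := by
    apply srw_sum_eq_one m hm
    intro y hy
    refine Finset.mem_insert_of_mem (Finset.mem_Icc.2 ⟨fun i => ?_, fun i => ?_⟩)
    · have := abs_le.1 (hy i); simp only; linarith
    · have := abs_le.1 (hy i); simp only; linarith
  rw [← h]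
  exact Finset.single_le_sum (f := fun y => srwKernel m n x y) (fun i _ => srw_nonneg m n x i)
    (Finset.mem_insert_self _ _)

/-- shift operator -/
def shiftOp (m : ℕ) (e : Fin m → ℤ) : ((Fin m → ℤ) → ℝ) →ₗ[ℝ] ((Fin m → ℤ) → ℝ) where
  toFun f := fun x => f (x + e)
  map_add' _ _ := rfl
  map_smul' _ _ := rfl

/-- unit step -/
def stepVec (m : ℕ) (p : Fin m × Bool) : Fin m → ℤ := Pi.single p.1 (if p.2 then 1 else -1)

/-- sum of shifts -/
def shiftSum (m : ℕ) (s : Finset (Fin m × Bool)) :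
    ((Fin m → ℤ) → ℝ) →ₗ[ℝ] ((Fin m → ℤ) → ℝ) := ∑ p ∈ s, shiftOp m (stepVec m p)

lemma shiftSum_apply (m : ℕ) (s : Finset (Fin m × Bool)) (f : (Fin m → ℤ) → ℝ) (x : Fin m → ℤ) :
    shiftSum m s f x = ∑ p ∈ s, f (x + stepVec m p) := by
  simp [shiftSum, shiftOp, LinearMap.sum_apply, Finset.sum_apply]

lemma shift_commute (m : ℕ) (e e' : Fin m → ℤ) : Commute (shiftOp m e) (shiftOp m e') := by
  refine LinearMap.ext fun f => funext fun x => ?_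
  change f (x + e + e') = f (x + e' + e)
  rw [add_right_comm]

lemma shift_pow (m : ℕ) (e : Fin m → ℤ) (k : ℕ) (f : (Fin m → ℤ) → ℝ) (x : Fin m → ℤ) :
    ((shiftOp m e) ^ k) f x = f (x + k • e) := by
  induction k generalizing x with
  | zero => simp
  | succ k ih =>
    rw [pow_succ']
    change ((shiftOp m e) ^ k) f (x + e) = _
    rw [ih, succ_nsmul']
    congr 1
    abel

lemma shiftSum_pow_bound (m : ℕ) (s : Finset (Fin m × Bool)) (y : Fin m → ℤ) (j : ℕ) :
    (∀ x, 0 ≤ ((shiftSum m s) ^ j) (fun x => if x = y then 1 else 0) x) ∧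
    ∀ F : Finset (Fin m → ℤ),
      ∑ x ∈ F, ((shiftSum m s) ^ j) (fun x => if x = y then 1 else 0) x ≤ (s.card : ℝ) ^ j := by
  classical
  induction j with
  | zero =>
    refine ⟨fun x => ?_, fun F => ?_⟩
    · simp only [pow_zero, Module.End.one_apply]; split_ifs <;> norm_num
    · simp only [pow_zero, Module.End.one_apply, Finset.sum_ite_eq']; split_ifs <;> norm_num
  | succ j ih =>
    obtain ⟨h0, h1⟩ := ih
    have e : ∀ x, ((shiftSum m s) ^ (j+1)) (fun x => if x = y then (1:ℝ) else 0) x =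
      ∑ p ∈ s, ((shiftSum m s) ^ j) (fun x => if x = y then (1:ℝ) else 0) (x + stepVec m p) := by
      intro x
      rw [pow_succ', Module.End.mul_apply, shiftSum_apply]
    refine ⟨fun x => ?_, fun F => ?_⟩
    · rw [e]; exact Finset.sum_nonneg fun p _ => h0 _
    · simp only [e]
      rw [Finset.sum_comm, pow_succ', ← nsmul_eq_mul, ]
      refine Finset.sum_le_card_nsmul _ _ _ fun p _ => ?_
      have := h1 (F.map (addRightEmbedding (stepVec m p)))
      simpa only [Finset.sum_map, addRightEmbedding_apply] using this

lemma srw_eq (m : ℕ) (hm : 1 ≤ m) (y : Fin m → ℤ) (n : ℕ) : ∀ x,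
    (2 * (m:ℝ)) ^ n * srwKernel m n x y =
      ((shiftSum m Finset.univ) ^ n) (fun x => if x = y then 1 else 0) x := by
  induction n with
  | zero => intro x; simp [srwKernel]
  | succ n ih =>
    intro x
    rw [pow_succ' (shiftSum _ _), Module.End.mul_apply, shiftSum_apply, Fintype.sum_prod_type]
    simp only [srwKernel, Fintype.sum_bool, ← ih]
    have hm' : (m:ℝ) ≠ 0 := by positivity
    have a1 : ∀ i, x + stepVec m (i, true) = Function.update x i (x i + 1) := by
      intro i; ext k
      by_cases hk : k = i
      · subst hk; simp [stepVec]
      · simp [stepVec, hk]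
    have a2 : ∀ i, x + stepVec m (i, false) = Function.update x i (x i - 1) := by
      intro i; ext k
      by_cases hk : k = i
      · subst hk; simp [stepVec]; ring
      · simp [stepVec, hk]
    simp only [a1, a2, ← mul_add, ← Finset.mul_sum]
    field_simp
    ring

lemma poisson_max (N k : ℕ) (hN : 1 ≤ N) :
    (N:ℝ) ^ k / k.factorial ≤ Real.exp N / Real.sqrt N := by
  have hN' : (0:ℝ) < N := by positivity
  have h1 : (N:ℝ) ^ k / k.factorial ≤ (N:ℝ) ^ N / N.factorial := by
    rw [div_le_div_iff₀ (by positivity) (by positivity)]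
    rcases le_total k N with h | h
    · obtain ⟨l, rfl⟩ := Nat.exists_eq_add_of_le h
      have : (k+l).factorial ≤ (k+l)^l * k.factorial := by
        have := Nat.factorial_mul_pow_sub_le_factorial (n := k) (m := k + l) h
        have h3 := Nat.factorial_mul_descFactorial (n := k+l) (k := l) (by omega)
        simp at h3
        rw [← h3, mul_comm]
        exact Nat.mul_le_mul_right _ (Nat.descFactorial_le_pow _ _)
      rw [pow_add (((k+l : ℕ)):ℝ), mul_assoc]
      gcongr
      exact_mod_cast this
    · obtain ⟨l, rfl⟩ := Nat.exists_eq_add_of_le h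
      have : N.factorial * N ^ l ≤ (N+l).factorial :=
        (Nat.mul_le_mul_left _ (Nat.pow_le_pow_left (by omega) l)).trans
          (Nat.factorial_mul_pow_le_factorial)
      rw [pow_add, mul_assoc, mul_comm ((N:ℝ)^l)]
      gcongr
      exact_mod_cast this
  refine h1.trans ?_
  have h2 := Stirling.le_factorial_stirling N
  rw [div_le_div_iff₀ (by positivity) (by positivity)]
  have h3 : Real.sqrt N ≤ Real.sqrt (2 * Real.pi * N) := by
    apply Real.sqrt_le_sqrt
    nlinarith [Real.pi_gt_three]
  have h4 : Real.exp N * (N / Real.exp 1) ^ N = (N:ℝ)^N := by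
    rw [div_pow, ← Real.exp_nat_mul]; simp; field_simp
  calc (N:ℝ)^N * Real.sqrt N = Real.exp N * (Real.sqrt N * (N / Real.exp 1) ^ N) := by
        rw [← h4]; ring
    _ ≤ Real.exp N * (Real.sqrt (2 * Real.pi * N) * (N / Real.exp 1) ^ N) := by gcongr
    _ ≤ _ := by gcongr

lemma heat_le (m : ℕ) (hm : 1 ≤ m) (N : ℕ) (hN : 1 ≤ N) (x y : Fin m → ℤ) :
    heatKernel m N x y ≤ 1 / Real.sqrt N := by
  classical
  have hN' : (0:ℝ) < N := by positivity
  unfold heatKernel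
  apply Real.tsum_le_of_sum_range_le
  · intro n; have := srw_nonneg m n x y; positivity
  intro M
  set i0 : Fin m × Bool := (⟨0, hm⟩, true) with hi0
  set s : Finset (Fin m × Bool) := Finset.univ.erase i0 with hs
  set B := shiftSum m s with hB
  set τ := shiftOp m (stepVec m i0) with hτ
  set δ : (Fin m → ℤ) → ℝ := fun x => if x = y then 1 else 0 with hδ
  have hT : shiftSum m Finset.univ = τ + B := by
    rw [hB, hτ, shiftSum, shiftSum, hs,
      Finset.add_sum_erase Finset.univ (fun p => shiftOp m (stepVec m p)) (Finset.mem_univ i0)]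
  have hcomm : Commute τ B := by
    rw [hB, shiftSum]
    exact Commute.sum_right _ _ _ fun p _ => shift_commute m _ _
  have hcard : (s.card : ℝ) = 2 * m - 1 := by
    rw [hs, Finset.card_erase_of_mem (Finset.mem_univ _)]
    simp
    rw [Nat.cast_sub (by omega)]; push_cast; ring
  obtain ⟨b0, b1⟩ : _ ∧ _ := ⟨fun j => (shiftSum_pow_bound m s y j).1,
    fun j => (shiftSum_pow_bound m s y j).2⟩
  have hterm : ∀ n, Real.exp (-(2 * m) * N) * ((2 * m) * N) ^ n / n.factorial * srwKernel m n x y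
      = Real.exp (-(2 * m) * N) * ∑ p ∈ Finset.HasAntidiagonal.antidiagonal n,
        (N:ℝ)^p.1 / p.1.factorial * ((N:ℝ)^p.2 / p.2.factorial *
          (B ^ p.2) δ (x + p.1 • stepVec m i0)) := by
    intro n
    have h1 := srw_eq m hm y n x
    rw [hT, hcomm.add_pow'] at h1
    simp only [LinearMap.sum_apply, Finset.sum_apply, LinearMap.smul_apply, Pi.smul_apply,
      Module.End.mul_apply] at h1
    simp only [hτ, shift_pow] at h1
    have : Real.exp (-(2 * m) * N) * ((2 * m) * N) ^ n / n.factorial * srwKernel m n x y =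
      Real.exp (-(2 * m) * N) * ((N:ℝ)^n / n.factorial * ((2 * (m:ℝ)) ^ n * srwKernel m n x y)) := by
      rw [mul_pow]; ring
    rw [this, h1, Finset.mul_sum]
    congr 1
    refine Finset.sum_congr rfl fun p hp => ?_
    have hp' := Finset.HasAntidiagonal.mem_antidiagonal.1 hp
    subst hp'
    rw [nsmul_eq_mul, Nat.choose_symm_add, Nat.add_choose, Nat.cast_div (Nat.factorial_mul_factorial_dvd_factorial_add _ _)
      (by positivity)]
    push_cast
    rw [pow_add]
    field_simp
    rfl
  rw [Finset.sum_congr rfl fun n _ => hterm n, ← Finset.mul_sum]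
  have hle : ∑ n ∈ Finset.range M, ∑ p ∈ Finset.HasAntidiagonal.antidiagonal n,
        (N:ℝ)^p.1 / p.1.factorial * ((N:ℝ)^p.2 / p.2.factorial *
          (B ^ p.2) δ (x + p.1 • stepVec m i0)) ≤
      ∑ p ∈ Finset.range M ×ˢ Finset.range M, Real.exp N / Real.sqrt N *
        ((N:ℝ)^p.2 / p.2.factorial * (B ^ p.2) δ (x + p.1 • stepVec m i0)) := by
    rw [← Finset.sum_biUnion]
    · have hsub : (Finset.range M).biUnion (fun n => Finset.HasAntidiagonal.antidiagonal n) ⊆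
          Finset.range M ×ˢ Finset.range M := by
        intro p hp
        simp only [Finset.mem_biUnion, Finset.mem_range, Finset.HasAntidiagonal.mem_antidiagonal,
          Finset.mem_product] at hp ⊢
        omega
      have hnn : ∀ p : ℕ × ℕ, 0 ≤ ((N:ℝ)^p.2 / p.2.factorial *
          (B ^ p.2) δ (x + p.1 • stepVec m i0)) := fun p =>
        mul_nonneg (by positivity) (b0 _ _)
      refine (Finset.sum_le_sum fun p _ => ?_).trans
        (Finset.sum_le_sum_of_subset_of_nonneg hsub fun p _ _ => ?_)
      · exact mul_le_mul_of_nonneg_right (poisson_max N p.1 hN) (hnn p)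
      · exact mul_nonneg (by positivity) (hnn p)
    · intro a _ b _ hab
      rw [Function.onFun, Finset.disjoint_left]
      intro p hp hp'
      simp only [Finset.HasAntidiagonal.mem_antidiagonal] at hp hp'
      omega
  have hinner : ∀ j, ∑ k ∈ Finset.range M, (B ^ j) δ (x + k • stepVec m i0) ≤ (2 * (m:ℝ) - 1) ^ j := by
    intro j
    have hinj : Function.Injective fun k : ℕ => x + k • stepVec m i0 := by
      intro a b hab
      have := congrFun (add_left_cancel hab) ⟨0, hm⟩
      simpa [stepVec, hi0] using this
    have := b1 j ((Finset.range M).map ⟨_, hinj⟩)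
    rw [Finset.sum_map, hcard] at this
    exact this
  have h5 : ∑ p ∈ Finset.range M ×ˢ Finset.range M, Real.exp N / Real.sqrt N *
        ((N:ℝ)^p.2 / p.2.factorial * (B ^ p.2) δ (x + p.1 • stepVec m i0)) ≤
      Real.exp N / Real.sqrt N * Real.exp ((2 * m - 1) * N) := by
    rw [← Finset.mul_sum, Finset.sum_product_right]
    gcongr
    calc _ ≤ ∑ j ∈ Finset.range M, ((2 * (m:ℝ) - 1) * N) ^ j / j.factorial := by
          refine Finset.sum_le_sum fun j _ => ?_
          simp only
          rw [← Finset.mul_sum, mul_pow, mul_comm _ ((N:ℝ)^j), mul_div_right_comm]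
          exact mul_le_mul_of_nonneg_left (hinner j) (by positivity)
      _ ≤ _ := Real.sum_le_exp_of_nonneg (by
          have : (1:ℝ) ≤ m := by exact_mod_cast hm
          apply mul_nonneg <;> linarith) _
  calc _ ≤ Real.exp (-(2 * m) * N) * (Real.exp N / Real.sqrt N * Real.exp ((2 * m - 1) * N)) :=
        mul_le_mul_of_nonneg_left (hle.trans h5) (Real.exp_pos _).le
    _ = 1 / Real.sqrt N * (Real.exp (-(2 * m) * N) * Real.exp N * Real.exp ((2 * m - 1) * N)) := by
        ring
    _ = _ := by
        rw [← Real.exp_add, ← Real.exp_add]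
        ring_nf
        simp

lemma heat_summable (m : ℕ) (hm : 1 ≤ m) (t : ℝ) (ht : 0 ≤ t) (x y : Fin m → ℤ) :
    Summable fun n : ℕ => Real.exp (-(2 * m) * t) * ((2 * m) * t) ^ n / n.factorial *
      srwKernel m n x y := by
  refine Summable.of_nonneg_of_le (fun n => ?_) (fun n => ?_)
    ((Real.summable_pow_div_factorial ((2 * m) * t)).mul_left (Real.exp (-(2 * m) * t)))
  · have := srw_nonneg m n x y; positivity
  · rw [mul_div_assoc]
    exact mul_le_of_le_one_right (by positivity) (srw_le_one m hm n x y)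

/-- the finite box -/
noncomputable def boxF (m R : ℕ) : Finset (Fin m → ℤ) := Finset.Icc (fun _ => -(R:ℤ)) (fun _ => (R:ℤ))

lemma heat_box (m : ℕ) (hm : 1 ≤ m) (t : ℝ) (ht : 0 ≤ t) (R : ℕ) :
    1 - Real.exp (2 * m * t) / 2 ^ R ≤ ∑ y ∈ boxF m R, heatKernel m t 0 y := by
  set l : ℝ := 2 * m * t with hl
  have hl0 : 0 ≤ l := by positivity
  have h1 : ∑ n ∈ Finset.range R, Real.exp (-l) * (l ^ n / n.factorial) ≤
      ∑ y ∈ boxF m R, heatKernel m t 0 y := by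
    calc _ = ∑ n ∈ Finset.range R, ∑ y ∈ boxF m R,
          Real.exp (-l) * (l ^ n / n.factorial) * srwKernel m n 0 y := by
          refine Finset.sum_congr rfl fun n hn => ?_
          rw [← Finset.mul_sum, srw_sum_eq_one m hm, mul_one]
          intro y hy
          have hn' : (n:ℤ) < R := by exact_mod_cast Finset.mem_range.1 hn
          refine Finset.mem_Icc.2 ⟨fun i => ?_, fun i => ?_⟩
          · have := abs_le.1 (hy i); simp at this ⊢; linarith
          · have := abs_le.1 (hy i); simp at this ⊢; linarith
      _ = ∑ y ∈ boxF m R, ∑ n ∈ Finset.range R,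
          Real.exp (-l) * (l ^ n / n.factorial) * srwKernel m n 0 y := Finset.sum_comm
      _ ≤ _ := by
          refine Finset.sum_le_sum fun y _ => ?_
          have := (heat_summable m hm t ht 0 y).sum_le_tsum (Finset.range R) (fun n _ => by
            have := srw_nonneg m n 0 y; positivity)
          unfold heatKernel
          refine le_trans (le_of_eq ?_) this
          refine Finset.sum_congr rfl fun n _ => ?_
          rw [hl, mul_div_assoc]
          ring_nf
  refine le_trans ?_ h1
  have hs := Real.summable_pow_div_factorial l
  have hs2 := Real.summable_pow_div_factorial (2 * l)
  have e1 : ∑' n : ℕ, l ^ n / n.factorial = Real.exp l := by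
    rw [Real.exp_eq_exp_ℝ, NormedSpace.exp_eq_tsum_div]
  have e2 : ∑' n : ℕ, (2*l) ^ n / n.factorial = Real.exp (2*l) := by
    rw [Real.exp_eq_exp_ℝ, NormedSpace.exp_eq_tsum_div]
  have e3 := hs.sum_add_tsum_nat_add R
  have hsR := (summable_nat_add_iff R).2 hs
  have hs2R := (summable_nat_add_iff R).2 hs2
  have e4 : 2 ^ R * ∑' n : ℕ, l ^ (n+R) / (n+R).factorial ≤ Real.exp (2*l) := by
    rw [← e2, ← hs2.sum_add_tsum_nat_add R, ← tsum_mul_left]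
    have : 0 ≤ ∑ n ∈ Finset.range R, (2*l) ^ n / n.factorial :=
      Finset.sum_nonneg fun n _ => by positivity
    refine le_trans ((hsR.mul_left _).tsum_le_tsum (fun n => ?_) hs2R) (le_add_of_nonneg_left this)
    rw [mul_pow 2 l, mul_div_assoc]
    exact mul_le_mul_of_nonneg_right (pow_le_pow_right₀ (one_le_two (α := ℝ)) (Nat.le_add_left R n))
      (by positivity)
  rw [← Finset.mul_sum]
  have e5 : ∑' n : ℕ, l ^ (n+R) / (n+R).factorial ≤ Real.exp (2*l) / 2 ^ R := by
    rw [le_div_iff₀ (by positivity), mul_comm]; exact e4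
  have e6 : ∑ n ∈ Finset.range R, l ^ n / n.factorial ≥ Real.exp l - Real.exp (2*l) / 2 ^ R := by
    linarith
  calc 1 - Real.exp l / 2 ^ R = Real.exp (-l) * (Real.exp l - Real.exp (2*l) / 2 ^ R) := by
        rw [mul_sub, ← Real.exp_add, ← mul_div_assoc, ← Real.exp_add]; ring_nf; simp; ring
    _ ≤ _ := by gcongr


open MeasureTheory ProbabilityTheory Filter Set

/-! ### Scenery estimates -/

lemma scen_hoeff {d : ℕ} {α : ℝ} {Ωz : Type*} [MeasurableSpace Ωz]
    {μ : Measure Ωz} {z : (Fin d → ℤ) → Ωz → ℝ} (hz : IsScenery d α μ z)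
    (l : ℝ) (hl : 0 < l) (p : (Fin d → ℤ) → ℝ) (F : Finset (Fin d → ℤ)) (K δ : ℝ) (hK : 0 < K)
    (hδ : 0 < δ) (hp0 : ∀ y ∈ F, 0 ≤ p y) (hpK : ∀ y ∈ F, p y ≤ K) (hp1 : ∑ y ∈ F, p y ≤ 1) :
    μ.real {ζ | δ ≤ ∑ y ∈ F, p y * (Real.exp (-(l * z y ζ)) - ∫ ζ', Real.exp (-(l * z 0 ζ')) ∂μ)} ≤
      Real.exp (-(2 * δ ^ 2 / K)) := by
  have := hz.prob
  set q := ∫ ζ', Real.exp (-(l * z 0 ζ')) ∂μ with hq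
  have hmeas : ∀ y, Measurable fun ζ => Real.exp (-(l * z y ζ)) := fun y =>
    Real.measurable_exp.comp ((hz.meas y).const_mul l).neg
  have hmean : ∀ y, ∫ ζ', Real.exp (-(l * z y ζ')) ∂μ = q := fun y =>
    ((hz.ident y).comp (u := fun r => Real.exp (-(l * r))) (by fun_prop)).integral_eq
  have hsub : ∀ y, HasSubgaussianMGF (fun ζ => p y * (Real.exp (-(l * z y ζ)) - q))
      (Real.toNNReal (p y ^ 2 / 4)) μ := by
    intro y
    have h := hasSubgaussianMGF_of_mem_Icc (μ := μ) (a := 0) (b := 1) (hmeas y).aemeasurable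
      (ae_of_all _ fun ζ => ⟨(Real.exp_pos _).le, by
        rw [Real.exp_le_one_iff]; have := mul_nonneg hl.le (hz.nonneg y ζ); linarith⟩)
    rw [hmean] at h
    convert h.const_mul (p y) using 1
    apply NNReal.eq
    rw [Real.coe_toNNReal _ (by positivity)]
    change _ = p y ^ 2 * (‖(1:ℝ) - 0‖ / 2) ^ 2
    simp
    ring
  have hind : iIndepFun (fun y ζ => p y * (Real.exp (-(l * z y ζ)) - q)) μ :=
    hz.indep.comp (fun y r => p y * (Real.exp (-(l * r)) - q)) (fun y => by fun_prop)
  have hs := HasSubgaussianMGF.sum_of_iIndepFun hind (s := F) fun y _ => hsub y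
  have hc : ((∑ y ∈ F, Real.toNNReal (p y ^ 2 / 4) : NNReal) : ℝ) ≤
      K / 4 := by
    rw [NNReal.coe_sum, Finset.sum_congr rfl fun y _ => Real.coe_toNNReal (p y ^ 2 / 4) (by positivity),
      ← Finset.sum_div]
    have : ∑ y ∈ F, p y ^ 2 ≤ K := by
      calc ∑ y ∈ F, p y ^ 2 ≤ ∑ y ∈ F, K * p y := Finset.sum_le_sum fun y hy => by
            rw [sq]; exact mul_le_mul_of_nonneg_right (hpK y hy) (hp0 y hy)
        _ = K * ∑ y ∈ F, p y := by rw [Finset.mul_sum]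
        _ ≤ K := mul_le_of_le_one_right hK.le hp1
    linarith
  have h1 := measure_ge_le_exp_mul_mgf (μ := μ)
    (X := fun ζ => ∑ y ∈ F, p y * (Real.exp (-(l * z y ζ)) - q)) δ
    (t := 4 * δ / K) (by positivity) (hs.integrable_exp_mul _)
  refine h1.trans ?_
  have h2 := hs.mgf_le (4 * δ / K)
  calc _ ≤ Real.exp (-(4 * δ / K) * δ) * Real.exp (K / 4 * (4 * δ / K) ^ 2 / 2) := by
        gcongr
        refine h2.trans ?_
        gcongr
    _ = _ := by
        rw [← Real.exp_add]
        congr 1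
        field_simp
        ring

lemma exists_laplace {d : ℕ} {α : ℝ} {Ωz : Type*} [MeasurableSpace Ωz]
    {μ : Measure Ωz} {z : (Fin d → ℤ) → Ωz → ℝ} (hz : IsScenery d α μ z)
    (hint : Integrable (z 0) μ) (b : ℝ) (hb : b < ∫ ζ, z 0 ζ ∂μ) :
    ∃ l : ℝ, 0 < l ∧ ∫ ζ, Real.exp (-(l * z 0 ζ)) ∂μ < Real.exp (-(l * b)) := by
  have := hz.prob
  have hlim : Tendsto (fun n : ℕ => ∫ ζ, ((n:ℝ) + 1) * (1 - Real.exp (-(1 / ((n:ℝ) + 1) * z 0 ζ))) ∂μ)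
      atTop (nhds (∫ ζ, z 0 ζ ∂μ)) := by
    refine tendsto_integral_of_dominated_convergence (z 0) (fun n => ?_) hint (fun n => ?_) ?_
    · have := hz.meas 0
      exact Measurable.aestronglyMeasurable (by fun_prop)
    · refine ae_of_all _ fun ζ => ?_
      have h0 := hz.nonneg 0 ζ
      have hn : (0:ℝ) < (n:ℝ) + 1 := by positivity
      have e1 : Real.exp (-(1 / ((n:ℝ) + 1) * z 0 ζ)) ≤ 1 := by
        rw [Real.exp_le_one_iff]
        have : 0 ≤ 1 / ((n:ℝ) + 1) * z 0 ζ := by positivity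
        linarith
      rw [Real.norm_of_nonneg (mul_nonneg hn.le (by linarith))]
      have e2 := Real.add_one_le_exp (-(1 / ((n:ℝ) + 1) * z 0 ζ))
      calc ((n:ℝ) + 1) * (1 - Real.exp (-(1 / ((n:ℝ) + 1) * z 0 ζ))) ≤
          ((n:ℝ) + 1) * (1 / ((n:ℝ) + 1) * z 0 ζ) := by gcongr; linarith
        _ = z 0 ζ := by field_simp
    · refine ae_of_all _ fun ζ => ?_
      have hd : HasDerivAt (fun s : ℝ => -Real.exp (-(s * z 0 ζ))) (z 0 ζ) 0 := by
        have h1 : HasDerivAt (fun s : ℝ => -(s * z 0 ζ)) (-(1 * z 0 ζ)) 0 :=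
          ((hasDerivAt_id (0:ℝ)).mul_const _).neg
        have := h1.exp.fun_neg
        simpa using this
      have h2 := hd.tendsto_slope_zero_right
      have h3 : Tendsto (fun n : ℕ => 1 / ((n:ℝ) + 1)) atTop (nhdsWithin 0 (Ioi 0)) := by
        refine tendsto_nhdsWithin_iff.2 ⟨tendsto_one_div_add_atTop_nhds_zero_nat, ?_⟩
        exact Eventually.of_forall fun n => by simp; positivity
      refine (h2.comp h3).congr fun n => ?_
      simp only [Function.comp, zero_add, zero_mul, neg_zero, Real.exp_zero, smul_eq_mul, one_div,
        inv_inv]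
      ring
  obtain ⟨n, hn⟩ := (hlim.eventually (lt_mem_nhds hb)).exists
  refine ⟨1 / ((n:ℝ) + 1), by positivity, ?_⟩
  have hn' : (0:ℝ) < (n:ℝ) + 1 := by positivity
  have hi : Integrable (fun ζ => Real.exp (-(1 / ((n:ℝ) + 1) * z 0 ζ))) μ := by
    have := hz.meas 0
    refine Integrable.of_bound (C := 1) (Measurable.aestronglyMeasurable (by fun_prop))
      (ae_of_all _ fun ζ => ?_)
    have h0 := hz.nonneg 0 ζ
    rw [Real.norm_of_nonneg (Real.exp_pos _).le, Real.exp_le_one_iff]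
    have : 0 ≤ 1 / ((n:ℝ) + 1) * z 0 ζ := by positivity
    linarith
  rw [integral_const_mul, integral_sub (integrable_const _) hi] at hn
  simp only [integral_const, probReal_univ, smul_eq_mul, mul_one] at hn
  set Q := ∫ ζ, Real.exp (-(1 / ((n:ℝ) + 1) * z 0 ζ)) ∂μ
  have e := Real.add_one_le_exp (-(1 / ((n:ℝ) + 1) * b))
  have : b / ((n:ℝ)+1) < 1 - Q := by
    rw [div_lt_iff₀ hn']; linarith
  have e' : 1 / ((n:ℝ) + 1) * b = b / ((n:ℝ)+1) := by ring
  rw [e'] at e ⊢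
  linarith

/-! ### Walk estimates -/

lemma walk_one {d : ℕ} {Ωw : Type*} [MeasurableSpace Ωw]
    {P : (Fin d → ℤ) → Measure Ωw} {S : ℝ → Ωw → (Fin d → ℤ)} (hS : IsCTSRW d P S)
    (t : ℝ) (ht : 0 ≤ t) (x y : Fin d → ℤ) :
    (P x).real {ω | S t ω = y} = heatKernel d t x y := by
  have := hS.fdd x 0 (fun _ => t) ht (fun i => i.elim0) (fun _ => y)
  simpa [Measure.real] using this

lemma walk_meas {d : ℕ} {Ωw : Type*} [MeasurableSpace Ωw]
    {P : (Fin d → ℤ) → Measure Ωw} {S : ℝ → Ωw → (Fin d → ℤ)} (hS : IsCTSRW d P S)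
    (t : ℝ) : Measurable (S t) := hS.meas.comp measurable_prodMk_left

lemma walk_sum {d : ℕ} {Ωw : Type*} [MeasurableSpace Ωw]
    {P : (Fin d → ℤ) → Measure Ωw} {S : ℝ → Ωw → (Fin d → ℤ)} (hS : IsCTSRW d P S)
    (t : ℝ) (ht : 0 ≤ t) (x : Fin d → ℤ) (F : Finset (Fin d → ℤ)) :
    (P x).real {ω | S t ω ∈ F} = ∑ y ∈ F, heatKernel d t x y := by
  have := hS.prob x
  have : {ω | S t ω ∈ F} = ⋃ y ∈ F, {ω | S t ω = y} := by ext; simp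
  rw [this, measureReal_biUnion_finset]
  · exact Finset.sum_congr rfl fun y _ => walk_one hS t ht x y
  · intro a _ b _ hab
    rw [Function.onFun, Set.disjoint_left]
    intro ω h1 h2
    exact hab (h1.symm.trans h2)
  · intro y _
    exact walk_meas hS t (measurableSet_singleton y)

lemma heat_nonneg' {d : ℕ} {Ωw : Type*} [MeasurableSpace Ωw]
    {P : (Fin d → ℤ) → Measure Ωw} {S : ℝ → Ωw → (Fin d → ℤ)} (hS : IsCTSRW d P S)
    (t : ℝ) (ht : 0 ≤ t) (x y : Fin d → ℤ) : 0 ≤ heatKernel d t x y := by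
  rw [← walk_one hS t ht]; exact measureReal_nonneg

lemma heat_sum_le {d : ℕ} {Ωw : Type*} [MeasurableSpace Ωw]
    {P : (Fin d → ℤ) → Measure Ωw} {S : ℝ → Ωw → (Fin d → ℤ)} (hS : IsCTSRW d P S)
    (t : ℝ) (ht : 0 ≤ t) (x : Fin d → ℤ) (F : Finset (Fin d → ℤ)) :
    ∑ y ∈ F, heatKernel d t x y ≤ 1 := by
  have := hS.prob x
  rw [← walk_sum hS t ht]; exact measureReal_le_one

lemma walk_exit {d : ℕ} (hd : 1 ≤ d) {Ωw : Type*} [MeasurableSpace Ωw]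
    {P : (Fin d → ℤ) → Measure Ωw} {S : ℝ → Ωw → (Fin d → ℤ)} (hS : IsCTSRW d P S)
    (t : ℝ) (ht : 0 ≤ t) (R : ℕ) :
    P 0 {ω | S t ω ∉ boxF d R} ≤ ENNReal.ofReal (Real.exp (2 * d * t) / 2 ^ R) := by
  have := hS.prob 0
  have hm : MeasurableSet {ω | S t ω ∈ boxF d R} := walk_meas hS t (boxF d R).measurableSet
  have h1 := probReal_compl_eq_one_sub (μ := P 0) hm
  rw [walk_sum hS t ht] at h1
  have h2 := heat_box d hd t ht R
  have e : {ω | S t ω ∉ boxF d R} = {ω | S t ω ∈ boxF d R}ᶜ := rfl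
  rw [e, ← ofReal_measureReal, h1]
  exact ENNReal.ofReal_le_ofReal (by linarith)

lemma chain_sum {d : ℕ} (B : Finset (Fin d → ℤ)) (a w : (Fin d → ℤ) → ℝ)
    (h : (Fin d → ℤ) → (Fin d → ℤ) → ℝ) (ρ : ℝ) (hρ : 0 ≤ ρ)
    (ha : ∀ y, 0 ≤ a y) (ha1 : ∑ y ∈ B, a y ≤ 1) (hh : ∀ x y, 0 ≤ h x y)
    (hw : ∀ y, 0 ≤ w y) (hw1 : ∀ y, w y ≤ 1)
    (hρw : ∀ x ∈ B, ∑ y ∈ B, h x y * w y ≤ ρ) (n : ℕ) :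
    ∑ y ∈ Fintype.piFinset (fun _ : Fin (n+1) => B),
      (a (y 0) * ∏ i : Fin n, h (y i.castSucc) (y i.succ)) * ∏ i, w (y i) ≤ ρ ^ n := by
  classical
  induction n with
  | zero =>
    have : ∑ y ∈ Fintype.piFinset (fun _ : Fin (0+1) => B),
      (a (y 0) * ∏ i : Fin 0, h (y i.castSucc) (y i.succ)) * ∏ i, w (y i) =
      ∑ y ∈ B, a y * w y := by
      refine Finset.sum_bij' (fun y _ => y 0) (fun y _ => fun _ => y) ?_ ?_ ?_ ?_ ?_
      · intro y hy; exact Fintype.mem_piFinset.1 hy 0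
      · intro y hy; exact Fintype.mem_piFinset.2 fun _ => hy
      · intro y hy; funext i; fin_cases i; rfl
      · intro y hy; rfl
      · intro y hy; simp
    rw [this, pow_zero]
    refine le_trans (Finset.sum_le_sum fun y _ => ?_) ha1
    exact mul_le_of_le_one_right (ha y) (hw1 y)
  | succ n ih =>
    have : ∑ y ∈ Fintype.piFinset (fun _ : Fin (n+1+1) => B),
      (a (y 0) * ∏ i : Fin (n+1), h (y i.castSucc) (y i.succ)) * ∏ i, w (y i) =
      ∑ p ∈ Fintype.piFinset (fun _ : Fin (n+1) => B) ×ˢ B,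
      ((a (p.1 0) * ∏ i : Fin n, h (p.1 i.castSucc) (p.1 i.succ)) * ∏ i, w (p.1 i)) *
        (h (p.1 (Fin.last n)) p.2 * w p.2) := by
      refine Finset.sum_bij' (fun y _ => (Fin.init y, y (Fin.last _)))
        (fun p _ => Fin.snoc (α := fun _ => (Fin d → ℤ)) p.1 p.2) ?_ ?_ ?_ ?_ ?_
      · intro y hy
        rw [Fintype.mem_piFinset] at hy
        exact Finset.mem_product.2 ⟨Fintype.mem_piFinset.2 fun i => hy _, hy _⟩
      · intro p hp
        rw [Finset.mem_product, Fintype.mem_piFinset] at hp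
        refine Fintype.mem_piFinset.2 fun i => ?_
        induction i using Fin.lastCases with
        | last => simpa using hp.2
        | cast i => simpa using hp.1 i
      · intro y hy; simp
      · intro p hp; simp
      · intro y hy
        rw [Fin.prod_univ_castSucc (n := n), Fin.prod_univ_castSucc (n := n+1)]
        simp only [Fin.init, Fin.succ_last, Fin.castSucc_zero, Fin.succ_castSucc]
        ring
    rw [this, Finset.sum_product, pow_succ]
    calc _ ≤ ∑ y ∈ Fintype.piFinset (fun _ : Fin (n+1) => B),
          ((a (y 0) * ∏ i : Fin n, h (y i.castSucc) (y i.succ)) * ∏ i, w (y i)) * ρ := by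
          refine Finset.sum_le_sum fun y hy => ?_
          simp only
          rw [← Finset.mul_sum]
          refine mul_le_mul_of_nonneg_left (hρw _ (Fintype.mem_piFinset.1 hy _)) ?_
          exact mul_nonneg (mul_nonneg (ha _) (Finset.prod_nonneg fun i _ => hh _ _))
            (Finset.prod_nonneg fun i _ => hw _)
      _ ≤ _ := by
          rw [← Finset.sum_mul]
          exact mul_le_mul_of_nonneg_right ih hρ

lemma walk_expect {d : ℕ} (hd : 1 ≤ d) {Ωw : Type*} [MeasurableSpace Ωw]
    {P : (Fin d → ℤ) → Measure Ωw} {S : ℝ → Ωw → (Fin d → ℤ)} (hS : IsCTSRW d P S)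
    (L v T : ℝ) (hL : 0 ≤ L) (hv : 0 ≤ v) (R n : ℕ) (hT : v + n * L ≤ T)
    (w : (Fin d → ℤ) → ℝ) (hw : ∀ y, 0 ≤ w y)
    (hw1 : ∀ y, w y ≤ 1) (ρ : ℝ) (hρ : 0 ≤ ρ)
    (hρw : ∀ x ∈ boxF d R, ∑ y ∈ boxF d R, heatKernel d L x y * w y ≤ ρ) :
    ∫⁻ ω, ENNReal.ofReal (∏ i : Fin (n+1), w (S (v + i * L) ω)) ∂(P 0) ≤
      ENNReal.ofReal (ρ ^ n + (n + 1) * (Real.exp (2 * d * T) / 2 ^ R)) := by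
  classical
  have := hS.prob 0
  set B := boxF d R
  have hle : ∀ ω, ENNReal.ofReal (∏ i : Fin (n+1), w (S (v + i * L) ω)) ≤
      ∑ y ∈ Fintype.piFinset (fun _ : Fin (n+1) => B),
        Set.indicator {ω | ∀ i : Fin (n+1), S (v + i * L) ω = y i}
          (fun _ => ENNReal.ofReal (∏ i, w (y i))) ω +
      ∑ i : Fin (n+1), Set.indicator {ω | S (v + i * L) ω ∉ B} (fun _ => 1) ω := by
    intro ω
    by_cases hω : ∀ i : Fin (n+1), S (v + i * L) ω ∈ B
    · refine le_trans ?_ le_self_add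
      refine le_trans ?_ (Finset.single_le_sum (f := fun y : Fin (n+1) → (Fin d → ℤ) =>
        Set.indicator {ω | ∀ i : Fin (n+1), S (v + i * L) ω = y i}
          (fun _ => ENNReal.ofReal (∏ i, w (y i))) ω) (fun _ _ => zero_le)
          (Fintype.mem_piFinset.2 hω))
      simp
    · push Not at hω
      obtain ⟨i, hi⟩ := hω
      refine le_trans ?_ le_add_self
      refine le_trans ?_ (Finset.single_le_sum (f := fun i : Fin (n+1) =>
        Set.indicator {ω | S (v + i * L) ω ∉ B} (fun _ => (1:ENNReal)) ω) (fun _ _ => zero_le)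
          (Finset.mem_univ i))
      simp only [Set.indicator, Set.mem_ofPred_eq, hi, not_false_eq_true, if_true]
      rw [ENNReal.ofReal_le_one]
      exact Finset.prod_le_one (fun _ _ => hw _) (fun _ _ => hw1 _)
  have hm1 : ∀ y : Fin (n+1) → (Fin d → ℤ), MeasurableSet
      {ω | ∀ i : Fin (n+1), S (v + i * L) ω = y i} := by
    intro y
    rw [Set.ofPred_forall]
    exact MeasurableSet.iInter fun i => walk_meas hS _ (measurableSet_singleton _)
  have hm2 : ∀ i : Fin (n+1), MeasurableSet {ω | S (v + i * L) ω ∉ B} := by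
    intro i
    exact (walk_meas hS (v + i * L) B.measurableSet).compl
  refine (lintegral_mono hle).trans ?_
  rw [lintegral_add_left (Finset.measurable_fun_sum _ fun y _ => measurable_const.indicator (hm1 y)),
    lintegral_finsetSum _ (fun y _ => measurable_const.indicator (hm1 y)),
    lintegral_finsetSum _ (fun y _ => measurable_const.indicator (hm2 y))]
  simp only [lintegral_indicator_const (hm1 _), lintegral_indicator_const (hm2 _), one_mul]
  rw [ENNReal.ofReal_add (by positivity) (by positivity)]
  have hfdd : ∀ y : Fin (n+1) → (Fin d → ℤ), P 0 {ω | ∀ i : Fin (n+1), S (v + i * L) ω = y i} =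
      ENNReal.ofReal (heatKernel d v 0 (y 0) *
        ∏ i : Fin n, heatKernel d L (y i.castSucc) (y i.succ)) := by
    intro y
    have := hS.fdd 0 n (fun i => v + i * L) (by simpa using hv)
      (fun i => by simp; nlinarith) y
    rw [← ENNReal.ofReal_toReal (measure_ne_top (P 0) _), this]
    congr 2
    · simp
    · refine Finset.prod_congr rfl fun i _ => ?_
      congr 1
      simp
      ring
  have hiL : ∀ i : Fin (n+1), (i:ℝ) * L ≤ n * L := fun i =>
    mul_le_mul_of_nonneg_right (by exact_mod_cast Nat.lt_succ_iff.1 i.2) hL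
  gcongr
  · rw [← ENNReal.ofReal_toReal (a := ∑ y ∈ _, _) (ENNReal.sum_ne_top.2 fun y _ =>
      ENNReal.mul_ne_top ENNReal.ofReal_ne_top (measure_ne_top _ _))]
    apply ENNReal.ofReal_le_ofReal
    rw [ENNReal.toReal_sum (fun y _ =>
      ENNReal.mul_ne_top ENNReal.ofReal_ne_top (measure_ne_top _ _))]
    refine le_trans (le_of_eq ?_) (chain_sum B (heatKernel d v 0) w (heatKernel d L) ρ hρ
      (heat_nonneg' hS v hv 0) (heat_sum_le hS v hv 0 B) (heat_nonneg' hS L hL) hw hw1 hρw n)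
    refine Finset.sum_congr rfl fun y _ => ?_
    rw [hfdd, ENNReal.toReal_mul, ENNReal.toReal_ofReal (Finset.prod_nonneg fun _ _ => hw _),
      ENNReal.toReal_ofReal (mul_nonneg (heat_nonneg' hS v hv _ _)
        (Finset.prod_nonneg fun _ _ => heat_nonneg' hS L hL _ _)), mul_comm]
  · calc _ ≤ ∑ i : Fin (n+1), ENNReal.ofReal (Real.exp (2 * d * T) / 2 ^ R) := by
          refine Finset.sum_le_sum fun i _ => ?_
          refine (walk_exit hd hS _ (by positivity) R).trans ?_
          apply ENNReal.ofReal_le_ofReal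
          have := hiL i
          gcongr
          linarith
      _ = _ := by
          rw [Finset.sum_const, Finset.card_univ, Fintype.card_fin, nsmul_eq_mul,
            ENNReal.ofReal_mul (by positivity)]
          congr 1
          rw [← Nat.cast_add_one, ENNReal.ofReal_natCast]

lemma jensen_block (n : ℕ) (L : ℝ) (hL : 0 < L) (g : ℝ → ℝ) (hg0 : ∀ u, 0 ≤ g u)
    (hgi : IntegrableOn g (Ioc 0 ((n + 1 : ℕ) * L))) (a l : ℝ) (hl : 0 < l)
    (ha : ∫ u in Ioc 0 ((n + 1 : ℕ) * L), g u ≤ a) :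
    ENNReal.ofReal (L * Real.exp (-(l * a / L))) ≤
      ∫⁻ v in Ioc 0 L, ENNReal.ofReal (∏ i : Fin (n+1), Real.exp (-(l * g (v + i * L)))) := by
  have hII : ∀ k < n + 1, IntervalIntegrable g volume ((k:ℕ) * L) ((k + 1 : ℕ) * L) := by
    intro k hk
    rw [intervalIntegrable_iff_integrableOn_Ioc_of_le (by push_cast; nlinarith)]
    refine hgi.mono_set (Ioc_subset_Ioc (by positivity) ?_)
    have : ((k + 1 : ℕ) : ℝ) ≤ (n + 1 : ℕ) := by exact_mod_cast hk
    exact mul_le_mul_of_nonneg_right this hL.le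
  have hIk : ∀ k < n + 1, IntegrableOn (fun v => g (v + k * L)) (Ioc 0 L) := by
    intro k hk
    have := (hII k hk).comp_add_right (k * L)
    rw [sub_self, show ((k + 1 : ℕ):ℝ) * L - k * L = L by push_cast; ring,
      intervalIntegrable_iff_integrableOn_Ioc_of_le hL.le] at this
    exact this
  have hsum : ∑ k ∈ Finset.range (n+1), ∫ v in Ioc 0 L, g (v + k * L) =
      ∫ u in Ioc 0 ((n + 1 : ℕ) * L), g u := by
    have h1 := intervalIntegral.sum_integral_adjacent_intervals (f := g) (μ := volume)
      (a := fun k : ℕ => (k:ℝ) * L) (n := n+1) hII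
    simp only [Nat.cast_zero, zero_mul] at h1
    rw [intervalIntegral.integral_of_le (a := 0) (by positivity)] at h1
    rw [← h1]
    refine Finset.sum_congr rfl fun k _ => ?_
    rw [← intervalIntegral.integral_of_le hL.le, intervalIntegral.integral_comp_add_right]
    congr 1
    · simp
    · push_cast; ring
  set Y : ℝ → ℝ := fun v => ∑ k ∈ Finset.range (n+1), g (v + k * L) with hY
  have hYi : IntegrableOn Y (Ioc 0 L) :=
    integrable_finsetSum _ fun k hk => hIk k (Finset.mem_range.1 hk)
  have hYint : ∫ v in Ioc 0 L, Y v ≤ a := by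
    rw [hY, integral_finsetSum _ fun k hk => hIk k (Finset.mem_range.1 hk), hsum]
    exact ha
  have hprod : ∀ v, ∏ i : Fin (n+1), Real.exp (-(l * g (v + i * L))) = Real.exp (-(l * Y v)) := by
    intro v
    rw [← Real.exp_sum, hY]
    congr 1
    rw [Finset.sum_neg_distrib, ← Finset.mul_sum,
      Fin.sum_univ_eq_sum_range (fun k : ℕ => g (v + k * L))]
  simp only [hprod]
  have hEi : IntegrableOn (fun v => Real.exp (-(l * Y v))) (Ioc 0 L) := by
    refine Integrable.of_bound (C := 1) ?_ (ae_of_all _ fun v => ?_)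
    · exact Real.continuous_exp.comp_aestronglyMeasurable (hYi.1.const_mul l).neg
    · rw [Real.norm_of_nonneg (Real.exp_pos _).le, Real.exp_le_one_iff]
      have : 0 ≤ Y v := Finset.sum_nonneg fun k _ => hg0 _
      have := mul_nonneg hl.le this
      linarith
  rw [← ofReal_integral_eq_lintegral_ofReal hEi (ae_of_all _ fun v => (Real.exp_pos _).le)]
  apply ENNReal.ofReal_le_ofReal
  set u0 := -(l * a / L) with hu0
  have hLi : IntegrableOn (fun v => Real.exp u0 * ((1 - u0) - l * Y v)) (Ioc 0 L) :=
    (((integrable_const _).sub (hYi.const_mul l)).const_mul _)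
  calc L * Real.exp u0 ≤ ∫ v in Ioc 0 L, Real.exp u0 * ((1 - u0) - l * Y v) := by
        rw [integral_const_mul, integral_sub (integrable_const _) (hYi.const_mul l),
          integral_const_mul]
        simp only [integral_const, smul_eq_mul]
        have : (volume.restrict (Ioc 0 L)).real univ = L := by simp [Measure.real, hL.le]
        rw [this, mul_comm]
        gcongr
        have e : L * u0 = -(l * a) := by rw [hu0]; field_simp
        have := mul_le_mul_of_nonneg_left hYint hl.le
        linarith
    _ ≤ _ := by
        refine integral_mono hLi hEi fun v => ?_
        have e := Real.add_one_le_exp (-(l * Y v) - u0)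
        have : Real.exp (-(l * Y v)) = Real.exp u0 * Real.exp (-(l * Y v) - u0) := by
          rw [← Real.exp_add]; congr 1; ring
        simp only
        rw [this]
        gcongr
        linarith

lemma walk_dev {d : ℕ} (hd : 1 ≤ d) {Ωw : Type*} [MeasurableSpace Ωw]
    {P : (Fin d → ℤ) → Measure Ωw} {S : ℝ → Ωw → (Fin d → ℤ)} (hS : IsCTSRW d P S)
    (L : ℝ) (hL : 0 < L) (R n : ℕ) (f : (Fin d → ℤ) → ℝ) (hf : ∀ y, 0 ≤ f y)
    (hfi : ∀ᵐ ω ∂(P 0), IntegrableOn (fun u => f (S u ω)) (Ioc 0 ((n + 1 : ℕ) * L)))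
    (l a ρ : ℝ) (hl : 0 < l) (hρ : 0 ≤ ρ)
    (hρw : ∀ x ∈ boxF d R, ∑ y ∈ boxF d R, heatKernel d L x y * Real.exp (-(l * f y)) ≤ ρ) :
    P 0 {ω | ∫ u in Ioc 0 ((n + 1 : ℕ) * L), f (S u ω) ≤ a} ≤
      ENNReal.ofReal (Real.exp (l * a / L) *
        (ρ ^ n + (n + 1) * (Real.exp (2 * d * ((n + 1 : ℕ) * L)) / 2 ^ R))) := by
  have := hS.prob 0
  set Q := ρ ^ n + (n + 1) * (Real.exp (2 * d * ((n + 1 : ℕ) * L)) / 2 ^ R) with hQ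
  have hQ0 : 0 ≤ Q := by positivity
  let G : ℝ → Ωw → ENNReal := fun v ω =>
    ENNReal.ofReal (∏ i : Fin (n+1), Real.exp (-(l * f (S (v + i * L) ω))))
  have hfm : Measurable f := Measurable.of_discrete
  have hG : Measurable (Function.uncurry G) := by
    refine ENNReal.measurable_ofReal.comp (Finset.measurable_fun_prod _ fun i _ => ?_)
    have h1 : Measurable fun p : ℝ × Ωw => S (p.1 + i * L) p.2 :=
      hS.meas.comp ((measurable_fst.add_const _).prodMk measurable_snd)
    exact Real.measurable_exp.comp (((hfm.comp h1).const_mul l).neg)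
  have hGω : Measurable fun ω => ∫⁻ v in Ioc 0 L, G v ω :=
    Measurable.lintegral_prod_left' hG
  set E := ENNReal.ofReal (L * Real.exp (-(l * a / L))) with hE
  have hE0 : E ≠ 0 := by
    rw [hE]; simp; positivity
  have hsub : P 0 {ω | ∫ u in Ioc 0 ((n + 1 : ℕ) * L), f (S u ω) ≤ a} ≤
      P 0 {ω | E ≤ ∫⁻ v in Ioc 0 L, G v ω} := by
    apply measure_mono_ae
    filter_upwards [hfi] with ω hω h
    exact jensen_block n L hL (fun u => f (S u ω)) (fun u => hf _) hω a l hl h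
  have hM := mul_meas_ge_le_lintegral (μ := P 0) hGω E
  rw [lintegral_lintegral_swap
    (by exact (hG.comp measurable_swap).aemeasurable)] at hM
  have hb : ∫⁻ v in Ioc 0 L, ∫⁻ ω, G v ω ∂(P 0) ≤ ENNReal.ofReal (L * Q) := by
    calc _ ≤ ∫⁻ v in Ioc 0 L, ENNReal.ofReal Q := by
          refine setLIntegral_mono measurable_const fun v hv => ?_
          refine walk_expect hd hS L v _ hL.le hv.1.le R n ?_ (fun y => Real.exp (-(l * f y)))
            (fun y => (Real.exp_pos _).le) (fun y => ?_) ρ hρ hρw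
          · have := hv.2; push_cast; linarith
          · rw [Real.exp_le_one_iff]; have := mul_nonneg hl.le (hf y); linarith
      _ = _ := by
          rw [setLIntegral_const, Real.volume_Ioc, sub_zero, mul_comm, ENNReal.ofReal_mul hL.le]
  refine hsub.trans ?_
  have h2 : P 0 {ω | E ≤ ∫⁻ v in Ioc 0 L, G v ω} ≤ ENNReal.ofReal (L * Q) / E := by
    rw [ENNReal.le_div_iff_mul_le (Or.inl hE0) (Or.inl ENNReal.ofReal_ne_top), mul_comm]
    exact hM.trans hb
  refine h2.trans (le_of_eq ?_)
  rw [hE, ← ENNReal.ofReal_div_of_pos (by positivity)]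
  congr 1
  rw [Real.exp_neg]
  field_simp

lemma ae_integrable {d : ℕ} {α : ℝ} {Ωz Ωw : Type*} [MeasurableSpace Ωz] [MeasurableSpace Ωw]
    {μ : Measure Ωz} {z : (Fin d → ℤ) → Ωz → ℝ} (hz : IsScenery d α μ z)
    (hint : Integrable (z 0) μ)
    {P : (Fin d → ℤ) → Measure Ωw} {S : ℝ → Ωw → (Fin d → ℤ)} (hS : IsCTSRW d P S) :
    ∀ᵐ ζ ∂μ, ∀ᵐ ω ∂(P 0), ∀ N : ℕ, IntegrableOn (fun u => z (S u ω) ζ) (Ioc 0 (N:ℝ)) := by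
  have := hS.prob 0
  have := hz.prob
  simp only [ae_all_iff]
  intro N
  have hzm : Measurable fun p : Ωz × (Fin d → ℤ) => z p.2 p.1 :=
    measurable_from_prod_countable_left fun y => hz.meas y
  have hm : Measurable fun p : Ωz × (Ωw × ℝ) => ENNReal.ofReal (z (S p.2.2 p.2.1) p.1) := by
    refine ENNReal.measurable_ofReal.comp (hzm.comp (measurable_fst.prodMk ?_))
    exact hS.meas.comp ((measurable_snd.comp measurable_snd).prodMk
      (measurable_fst.comp measurable_snd))
  have hfin : ∫⁻ ζ, ∫⁻ p, ENNReal.ofReal (z (S p.2 p.1) ζ)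
      ∂((P 0).prod (volume.restrict (Ioc 0 (N:ℝ)))) ∂μ < ⊤ := by
    rw [lintegral_lintegral_swap hm.aemeasurable]
    have hc : ∀ p : Ωw × ℝ, ∫⁻ ζ, ENNReal.ofReal (z (S p.2 p.1) ζ) ∂μ =
        ∫⁻ ζ, ENNReal.ofReal (z 0 ζ) ∂μ := fun p =>
      ((hz.ident (S p.2 p.1)).comp ENNReal.measurable_ofReal).lintegral_eq
    simp only [hc, lintegral_const]
    refine ENNReal.mul_lt_top ?_ (measure_lt_top _ _)
    exact hint.lintegral_lt_top
  have h1 := ae_lt_top (hm.lintegral_prod_right' (ν := (P 0).prod (volume.restrict (Ioc 0 (N:ℝ)))))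
    hfin.ne
  filter_upwards [h1] with ζ hζ
  have hmζ : Measurable fun p : Ωw × ℝ => ENNReal.ofReal (z (S p.2 p.1) ζ) :=
    hm.comp measurable_prodMk_left
  rw [lintegral_prod _ hmζ.aemeasurable] at hζ
  have h2 := ae_lt_top (hmζ.lintegral_prod_right' (ν := volume.restrict (Ioc 0 (N:ℝ)))) hζ.ne
  filter_upwards [h2] with ω hω
  have hSm : Measurable fun u => S u ω := hS.meas.comp measurable_prodMk_right
  have hzd : Measurable fun y => z y ζ := Measurable.of_discrete
  refine ⟨(hzd.comp hSm).aestronglyMeasurable, ?_⟩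
  rw [hasFiniteIntegral_iff_ofReal (ae_of_all _ fun u => hz.nonneg _ _)]
  exact hω

lemma card_boxF (d R : ℕ) : (boxF d R).card = (2 * R + 1) ^ d := by
  unfold boxF
  rw [Pi.card_Icc]
  simp only [Int.card_Icc, Finset.prod_const, Finset.card_univ, Fintype.card_fin]
  congr 1
  omega

lemma summable_aux (d : ℕ) (κ : ℝ) (hκ : 0 < κ) :
    Summable fun n : ℕ => ((2 * ((n:ℝ) + 1) ^ 3 + 1) ^ d) * Real.exp (-(κ * Real.sqrt ((n:ℝ) + 1))) := by
  set k := 6 * d + 4 with hk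
  have hs : Summable fun n : ℕ => (3 ^ d * k.factorial / κ ^ k) * (1 / ((n:ℝ) + 1) ^ 2) := by
    refine Summable.mul_left _ ?_
    have := (summable_nat_add_iff 1).2 (Real.summable_one_div_nat_pow.2 (by norm_num : 1 < 2))
    simpa using this
  refine Summable.of_nonneg_of_le (fun n => by positivity) (fun n => ?_) hs
  set x : ℝ := (n:ℝ) + 1 with hx
  have hx1 : 1 ≤ x := by rw [hx]; linarith [Nat.cast_nonneg (α := ℝ) n]
  have hx0 : 0 < x := by linarith
  set s := Real.sqrt x with hsx
  have hs0 : 0 < s := Real.sqrt_pos.2 hx0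
  have hss : s ^ 2 = x := Real.sq_sqrt hx0.le
  have h1 := Real.pow_div_factorial_le_exp (κ * s) (by positivity) k
  have h2 : Real.exp (-(κ * s)) ≤ k.factorial / (κ * s) ^ k := by
    rw [Real.exp_neg, inv_le_comm₀ (Real.exp_pos _) (by positivity), inv_div]
    exact h1
  have h3 : (2 * x ^ 3 + 1) ^ d ≤ (3 * x ^ 3) ^ d := by
    gcongr
    have : 1 ≤ x ^ 3 := one_le_pow₀ hx1
    linarith
  calc _ ≤ (3 * x ^ 3) ^ d * (k.factorial / (κ * s) ^ k) := by gcongr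
    _ = _ := by
      have : (κ * s) ^ k = κ ^ k * (x ^ (3 * d) * x ^ 2) := by
        rw [mul_pow, hk, ← hss]
        ring
      rw [this, mul_pow, ← pow_mul]
      field_simp

lemma scen_good {d : ℕ} (hd : 1 ≤ d) {α : ℝ} {Ωz Ωw : Type*} [MeasurableSpace Ωz]
    [MeasurableSpace Ωw]
    {μ : Measure Ωz} {z : (Fin d → ℤ) → Ωz → ℝ} (hz : IsScenery d α μ z)
    {P : (Fin d → ℤ) → Measure Ωw} {S : ℝ → Ωw → (Fin d → ℤ)} (hS : IsCTSRW d P S)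
    (l ρ : ℝ) (hl : 0 < l) (hρ : ∫ ζ, Real.exp (-(l * z 0 ζ)) ∂μ < ρ) :
    ∀ᵐ ζ ∂μ, ∀ᶠ n : ℕ in atTop, ∀ x ∈ boxF d ((n + 1) ^ 3),
      ∑ y ∈ boxF d ((n + 1) ^ 3), heatKernel d ((n + 1 : ℕ) : ℝ) x y * Real.exp (-(l * z y ζ)) ≤ ρ := by
  have := hz.prob
  set q := ∫ ζ, Real.exp (-(l * z 0 ζ)) ∂μ with hq
  have hq0 : 0 ≤ q := integral_nonneg fun ζ => (Real.exp_pos _).le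
  set δ := ρ - q with hδ
  have hδ0 : 0 < δ := by rw [hδ]; linarith
  let bad : ℕ → Set Ωz := fun n => ⋃ x ∈ boxF d ((n + 1) ^ 3),
    {ζ | δ ≤ ∑ y ∈ boxF d ((n + 1) ^ 3), heatKernel d ((n + 1 : ℕ) : ℝ) x y *
      (Real.exp (-(l * z y ζ)) - q)}
  have hbad : ∀ n, μ (bad n) ≤ ENNReal.ofReal (((2 * ((n:ℝ) + 1) ^ 3 + 1) ^ d) *
      Real.exp (-((2 * δ ^ 2) * Real.sqrt ((n:ℝ) + 1)))) := by
    intro n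
    refine (measure_biUnion_finset_le _ _).trans ?_
    have hN : (1:ℕ) ≤ n + 1 := by omega
    have h0 : (0:ℝ) ≤ ((n + 1 : ℕ) : ℝ) := by positivity
    have hsq : 0 < Real.sqrt ((n + 1 : ℕ) : ℝ) := Real.sqrt_pos.2 (by positivity)
    calc _ ≤ ∑ x ∈ boxF d ((n + 1) ^ 3),
          ENNReal.ofReal (Real.exp (-((2 * δ ^ 2) * Real.sqrt ((n:ℝ) + 1)))) := by
          refine Finset.sum_le_sum fun x _ => ?_
          rw [← ofReal_measureReal]
          apply ENNReal.ofReal_le_ofReal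
          have := scen_hoeff hz l hl (heatKernel d ((n + 1 : ℕ) : ℝ) x) (boxF d ((n + 1) ^ 3))
            (1 / Real.sqrt ((n + 1 : ℕ) : ℝ)) δ (by positivity) hδ0
            (fun y _ => heat_nonneg' hS _ h0 x y) (fun y _ => heat_le d hd (n+1) hN x y)
            (heat_sum_le hS _ h0 x _)
          refine this.trans (le_of_eq ?_)
          rw [div_div_eq_mul_div, div_one]
          push_cast
          rfl
      _ = _ := by
          rw [Finset.sum_const, card_boxF, nsmul_eq_mul, ENNReal.ofReal_mul (by positivity)]
          congr 1
          rw [← ENNReal.ofReal_natCast]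
          push_cast
          rfl
  have hsum : ∑' n, μ (bad n) ≠ ⊤ := by
    refine ne_top_of_le_ne_top ?_ (ENNReal.tsum_le_tsum hbad)
    rw [← ENNReal.ofReal_tsum_of_nonneg (fun n => by positivity)
      (summable_aux d (2 * δ ^ 2) (by positivity))]
    exact ENNReal.ofReal_ne_top
  filter_upwards [ae_eventually_notMem hsum] with ζ hζ
  filter_upwards [hζ] with n hn x hx
  by_contra hcon
  push Not at hcon
  apply hn
  refine Set.mem_biUnion hx ?_
  change δ ≤ _
  simp only [mul_sub, Finset.sum_sub_distrib, ← Finset.sum_mul]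
  have h1 := heat_sum_le hS ((n + 1 : ℕ) : ℝ) (by positivity) x (boxF d ((n + 1) ^ 3))
  have h2 := mul_le_of_le_one_left hq0 h1
  linarith

lemma final_bound (d : ℕ) (l b η : ℝ) (hl : 0 < l) (hb : 0 < b) (hη : 0 < η) :
    ∀ᶠ n : ℕ in atTop, Real.exp (l * (((n + 1 : ℕ) + 1) ^ 2 * b) / (n + 1 : ℕ)) *
      (Real.exp (-(l * b) - η) ^ n + (n + 1) *
        (Real.exp (2 * d * ((n + 1 : ℕ) * (n + 1 : ℕ))) / 2 ^ ((n + 1) ^ 3))) ≤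
      Real.exp (-Real.sqrt ((n + 1 : ℕ) + 1)) := by
  have hlb : 0 < l * b := by positivity
  filter_upwards [tendsto_natCast_atTop_atTop.eventually_ge_atTop
      ((4 * (l * b) + 1 + η + 1 / (2 * η)) * 2 / η),
    tendsto_natCast_atTop_atTop.eventually_ge_atTop (2 * (4 * (l * b) + 2 * d + 4))] with n h1 h2
  push_cast
  set x : ℝ := (n:ℝ) + 1 with hx
  have hn0 : (0:ℝ) ≤ n := Nat.cast_nonneg n
  have hx1 : 1 ≤ x := by linarith
  have hx0 : 0 < x := by linarith
  set s := Real.sqrt (x + 1) with hs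
  have hs0 : 0 ≤ s := Real.sqrt_nonneg _
  have hss : s ^ 2 = x + 1 := Real.sq_sqrt (by linarith)
  have e1 : l * ((x + 1) ^ 2 * b) / x ≤ l * b * (x + 3) := by
    rw [div_le_iff₀ hx0]
    nlinarith
  have hhalf : Real.exp (-1) ≤ 1 / 2 := by
    rw [Real.exp_neg, inv_le_comm₀ (Real.exp_pos _) (by norm_num)]
    have := Real.add_one_le_exp (1:ℝ)
    norm_num at this ⊢
    linarith
  have t1 : Real.exp (l * b * (x + 3)) * Real.exp (-(l * b) - η) ^ n ≤ Real.exp (-s) * (1 / 2) := by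
    rw [← Real.exp_nat_mul, ← Real.exp_add]
    refine le_trans ?_ (mul_le_mul_of_nonneg_left hhalf (Real.exp_pos _).le)
    rw [← Real.exp_add, Real.exp_le_exp]
    have a1 : s ≤ η / 2 * (x + 1) + 1 / (2 * η) := by
      rw [← hss]
      have : 0 ≤ (η * s - 1) ^ 2 / (2 * η) := by positivity
      have e : (η * s - 1) ^ 2 / (2 * η) = η / 2 * s ^ 2 + 1 / (2 * η) - s := by
        field_simp
        ring
      linarith
    rw [div_le_iff₀ hη] at h1
    rw [hx] at a1 ⊢
    nlinarith
  have t2 : Real.exp (l * b * (x + 3)) * (x * (Real.exp (2 * d * (x * x)) / 2 ^ ((n + 1) ^ 3))) ≤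
      Real.exp (-s) * (1 / 2) := by
    have b1 : x ≤ Real.exp x := by linarith [Real.add_one_le_exp x]
    have b2 : Real.exp (x ^ 3 / 2) ≤ 2 ^ ((n + 1) ^ 3) := by
      have hl2 := Real.log_two_gt_d9
      have : (2:ℝ) ^ ((n + 1) ^ 3) = Real.exp (x ^ 3 * Real.log 2) := by
        rw [← Real.exp_log (two_pos : (0:ℝ) < 2), ← Real.exp_nat_mul, Real.exp_log two_pos]
        push_cast
        rfl
      rw [this, Real.exp_le_exp]
      have : 0 < x ^ 3 := by positivity
      nlinarith
    calc _ ≤ Real.exp (l * b * (x + 3)) * (Real.exp x * (Real.exp (2 * d * (x * x)) /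
            Real.exp (x ^ 3 / 2))) := by gcongr
      _ = Real.exp (l * b * (x + 3) + (x + (2 * d * (x * x) - x ^ 3 / 2))) := by
          rw [← Real.exp_sub, ← Real.exp_add, ← Real.exp_add]
      _ ≤ Real.exp (-s + -1) := by
          rw [Real.exp_le_exp]
          have hsx : s ≤ x + 1 := by nlinarith
          have hd0 : (0:ℝ) ≤ d := Nat.cast_nonneg d
          have hxx : x ≤ x ^ 2 := by nlinarith
          have c1 : x ^ 2 * (2 * (4 * (l * b) + 2 * d + 4)) ≤ x ^ 2 * x := by
            apply mul_le_mul_of_nonneg_left _ (by positivity)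
            linarith
          have c2 : l * b * (x + 3) ≤ l * b * (4 * x ^ 2) :=
            mul_le_mul_of_nonneg_left (by linarith) hlb.le
          have : x ^ 2 * x = x ^ 3 := by ring
          nlinarith
      _ ≤ _ := by
          rw [Real.exp_add]
          exact mul_le_mul_of_nonneg_left hhalf (Real.exp_pos _).le
  calc _ ≤ Real.exp (l * b * (x + 3)) * (Real.exp (-(l * b) - η) ^ n + x *
        (Real.exp (2 * d * (x * x)) / 2 ^ ((n + 1) ^ 3))) := by gcongr
    _ ≤ _ := by rw [mul_add]; linarith


/-- Proposition (lower deviation below the mean, integrable case): for `d ≥ 1`, `α > 0`,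
`𝔼[z(0)] < ∞` and every `ε ∈ (0, 𝔼[z(0)])` there is `c(ε) > 0` such that ℙ-a.s.,
`P₀(A(t) ≤ t(𝔼[z(0)] − ε)) ≤ exp(-t^{c(ε)})` for all sufficiently large `t`. -/
theorem stmt4 (d : ℕ) (hd : 1 ≤ d) (α : ℝ) (hα : 0 < α)
    {Ωz Ωw : Type*} [MeasurableSpace Ωz] [MeasurableSpace Ωw]
    (μ : Measure Ωz) (z : (Fin d → ℤ) → Ωz → ℝ) (hz : IsScenery d α μ z)
    (hint : Integrable (z 0) μ)
    (P : (Fin d → ℤ) → Measure Ωw) (S : ℝ → Ωw → (Fin d → ℤ)) (hS : IsCTSRW d P S) :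
    ∀ ε : ℝ, 0 < ε → ε < (∫ ζ, z 0 ζ ∂ μ) → ∃ c > (0 : ℝ),
      ∀ᵐ ζ ∂ μ, ∀ᶠ t in (atTop : Filter ℝ),
        ((P 0) {ω | rwrs d z S t ζ ω ≤ t * ((∫ ζ', z 0 ζ' ∂ μ) - ε)}).toReal
          ≤ Real.exp (-(t ^ c)) := by
  intro ε hε hεm
  set m := ∫ ζ, z 0 ζ ∂ μ with hm
  set b := m - ε with hb
  have hb0 : 0 < b := by rw [hb]; linarith
  have hbm : b < m := by rw [hb]; linarith
  obtain ⟨l, hl, hq⟩ := exists_laplace hz hint b hbm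
  have hq0 : 0 ≤ ∫ ζ, Real.exp (-(l * z 0 ζ)) ∂μ := integral_nonneg fun ζ => (Real.exp_pos _).le
  obtain ⟨ρ, hqρ, hρb⟩ := exists_between hq
  have hρ0 : 0 < ρ := lt_of_le_of_lt hq0 hqρ
  set η := -(l * b) - Real.log ρ with hη
  have hη0 : 0 < η := by
    have := (Real.log_lt_iff_lt_exp hρ0).2 hρb
    rw [hη]; linarith
  have hρη : ρ = Real.exp (-(l * b) - η) := by
    rw [hη, sub_sub_cancel, Real.exp_log hρ0]
  refine ⟨1 / 4, by norm_num, ?_⟩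
  have hprob := hS.prob 0
  filter_upwards [scen_good hd hz hS l ρ hl hqρ, ae_integrable hz hint hS] with ζ hgood hI
  have hev := hgood.and (final_bound d l b η hl hb0 hη0)
  have hfl : Tendsto (fun t : ℝ => ⌊Real.sqrt t⌋₊ - 1) atTop atTop :=
    (tendsto_sub_atTop_nat 1).comp (tendsto_nat_floor_atTop.comp Real.tendsto_sqrt_atTop)
  filter_upwards [hfl.eventually hev, eventually_ge_atTop (1:ℝ)] with t ⟨hg, hf⟩ ht
  obtain ⟨n, hn⟩ : ∃ n, ⌊Real.sqrt t⌋₊ = n + 1 := by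
    have : 1 ≤ ⌊Real.sqrt t⌋₊ := Nat.le_floor (by simpa using Real.one_le_sqrt.2 ht)
    exact ⟨⌊Real.sqrt t⌋₊ - 1, by omega⟩
  rw [hn, Nat.add_sub_cancel] at hg hf
  have hs0 : 0 ≤ Real.sqrt t := Real.sqrt_nonneg t
  have hst : Real.sqrt t ^ 2 = t := Real.sq_sqrt (by linarith)
  have hN1 : ((n + 1 : ℕ) : ℝ) ≤ Real.sqrt t := hn ▸ Nat.floor_le hs0
  have hN2 : Real.sqrt t < ((n + 1 : ℕ) : ℝ) + 1 := hn ▸ Nat.lt_floor_add_one (Real.sqrt t)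
  have hN0 : (0:ℝ) < ((n + 1 : ℕ) : ℝ) := by positivity
  have hNt : ((n + 1 : ℕ) : ℝ) * (n + 1 : ℕ) ≤ t := by nlinarith
  have htN : t ≤ (((n + 1 : ℕ) : ℝ) + 1) ^ 2 := by nlinarith
  have hIt : ∀ᵐ ω ∂(P 0), IntegrableOn (fun u => z (S u ω) ζ) (Ioc 0 t) := by
    filter_upwards [hI] with ω hω
    exact (hω ⌈t⌉₊).mono_set (Ioc_subset_Ioc_right (Nat.le_ceil t))
  have hsub : P 0 {ω | rwrs d z S t ζ ω ≤ t * b} ≤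
      P 0 {ω | ∫ u in Ioc 0 (((n + 1 : ℕ) : ℝ) * (n + 1 : ℕ)), z (S u ω) ζ ≤
        (((n + 1 : ℕ) : ℝ) + 1) ^ 2 * b} := by
    apply measure_mono_ae
    filter_upwards [hIt] with ω hω h
    have h' : ∫ u in Ioc 0 t, z (S u ω) ζ ≤ t * b := h
    change ∫ u in Ioc 0 (((n + 1 : ℕ) : ℝ) * (n + 1 : ℕ)), z (S u ω) ζ ≤
        (((n + 1 : ℕ) : ℝ) + 1) ^ 2 * b
    calc _ ≤ ∫ u in Ioc 0 t, z (S u ω) ζ :=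
          setIntegral_mono_set hω (ae_of_all _ fun u => hz.nonneg _ _)
            (Ioc_subset_Ioc_right hNt).eventuallyLE
      _ ≤ t * b := h'
      _ ≤ _ := mul_le_mul_of_nonneg_right htN hb0.le
  have hdev := walk_dev hd hS ((n + 1 : ℕ) : ℝ) hN0 ((n + 1) ^ 3) n (fun y => z y ζ)
    (fun y => hz.nonneg y ζ)
    (hIt.mono fun ω hω => hω.mono_set (Ioc_subset_Ioc_right hNt))
    l ((((n + 1 : ℕ) : ℝ) + 1) ^ 2 * b) ρ hl hρ0.le hg
  rw [hρη] at hdev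
  have hfin := (hsub.trans hdev).trans (ENNReal.ofReal_le_ofReal hf)
  refine (ENNReal.toReal_le_of_le_ofReal (Real.exp_pos _).le hfin).trans ?_
  rw [Real.exp_le_exp, neg_le_neg_iff, Real.sqrt_eq_rpow]
  calc t ^ (1 / 4 : ℝ) ≤ ((((n + 1 : ℕ) : ℝ) + 1) ^ 2) ^ (1 / 4 : ℝ) :=
        Real.rpow_le_rpow (by linarith) htN (by norm_num)
    _ = _ := by
        rw [← Real.rpow_natCast, ← Real.rpow_mul (by positivity)]
        norm_num
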